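/- arXiv:2210.14780 — 2 statements merged into one kernel-verified Lean document; each statement's English description precedes it below -/
import Mathlib

section
/- For every z ∈ ℝ and every direction δ ∈ {−1, 1}, the one-sided directional derivative of the partial sorted ℓ1 norm H exists and is given by: H'(z; δ) = Σ_{j ∈ C(ε_c)} λ_{(j)^-_{ε_c}} if z = 0; H'(z; δ) = sign(z)·δ·Σ_{j ∈ C(z + ε_c δ)} λ_{(j)^-_{z + ε_c δ}} if z ≠ 0 and |z| ∈ c^{∖k}; and H'(z; δ) = sign(z)·δ·Σ_{j ∈ C(z)} λ_{(j)^-_z} otherwise. -/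
open Finset Filter

noncomputable section

/-- The sign of a real number, with the convention `sgn 0 = 1`. -/
def sgn (t : ℝ) : ℝ := if t < 0 then -1 else 1

/-- A permutation sorting the absolute values of `β` in nonincreasing order. -/
def sortPerm {p : ℕ} (β : Fin p → ℝ) : Equiv.Perm (Fin p) :=
  (Fin.revPerm).trans (Tuple.sort fun j => |β j|)

/-- The sorted ℓ₁ norm `J(β) = Σ_j λ_j |β|_(j)`. -/
def sortedL1 {p : ℕ} (lam β : Fin p → ℝ) : ℝ :=
  ∑ j, lam j * |β (sortPerm β j)|

/-- `β(z)`: the vector obtained from `β` by replacing entries of the cluster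
`{i : |β i| = ck}` by `sign(β i) * z`. -/
def cupd {p : ℕ} (β : Fin p → ℝ) (ck z : ℝ) : Fin p → ℝ :=
  fun i => if |β i| = ck then sgn (β i) * z else β i

/-- The partial sorted ℓ₁ norm `H(z) = J(β(z))`. -/
def Hfun {p : ℕ} (lam β : Fin p → ℝ) (ck : ℝ) (z : ℝ) : ℝ :=
  sortedL1 lam (cupd β ck z)

/-- `S(w) = Σ_{j ∈ C(w)} λ_{(j)⁻_w}`, where `C(w) = {j : |β(w)_j| = |w|}`. -/
def Sval {p : ℕ} (lam β : Fin p → ℝ) (ck : ℝ) (w : ℝ) : ℝ :=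
  ∑ j, if |cupd β ck w j| = |w| then lam ((sortPerm (cupd β ck w))⁻¹ j) else 0

/-- squared Euclidean norm -/
def sqnorm {n : ℕ} (v : Fin n → ℝ) : ℝ := ∑ i, (v i) ^ 2

/-- `G(z) = (1/2)‖y − Xβ(z)‖² + H(z)`. -/
def Gfun {n p : ℕ} (lam : Fin p → ℝ) (X : Matrix (Fin n) (Fin p) ℝ) (y : Fin n → ℝ)
    (β : Fin p → ℝ) (ck : ℝ) (z : ℝ) : ℝ :=
  (1/2) * sqnorm (fun i => y i - ∑ j, X i j * cupd β ck z j) + Hfun lam β ck z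

/-- `x̃ = Σ_{j ∈ C_k} sign(β_j) X_{:j}`. -/
def xtil {n p : ℕ} (X : Matrix (Fin n) (Fin p) ℝ) (β : Fin p → ℝ) (ck : ℝ) : Fin n → ℝ :=
  fun i => ∑ j, if |β j| = ck then sgn (β j) * X i j else 0

/-- `γ = c_k ω + x̃ᵀ r` where `r = y − Xβ` and `ω = ‖x̃‖²`. -/
def gam {n p : ℕ} (X : Matrix (Fin n) (Fin p) ℝ) (y : Fin n → ℝ) (β : Fin p → ℝ) (ck : ℝ) : ℝ :=
  ck * sqnorm (xtil X β ck) + ∑ i, xtil X β ck i * (y i - ∑ j, X i j * β j)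

end

theorem abs_sgn_mul (t z : ℝ) : |sgn t * z| = |z| := by
  unfold sgn
  split_ifs <;> simp

theorem abs_cupd {p : ℕ} (β : Fin p → ℝ) (ck w : ℝ) (j : Fin p) :
    |cupd β ck w j| = if |β j| = ck then |w| else |β j| := by
  unfold cupd
  split_ifs
  · exact abs_sgn_mul _ _
  · rfl

theorem antitone_abs_comp_sortPerm {p : ℕ} (β : Fin p → ℝ) :
    Antitone fun j => |β (sortPerm β j)| := by
  intro i j hij
  exact Tuple.monotone_sort (fun j => |β j|) (Fin.rev_le_rev.mpr hij)

/-- The sorted ℓ₁ norm may be computed with any permutation that sorts the absolute values. -/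
theorem sortedL1_eq_sum_of_antitone {p : ℕ} (lam β : Fin p → ℝ) (σ : Equiv.Perm (Fin p))
    (hσ : Antitone fun j => |β (σ j)|) :
    sortedL1 lam β = ∑ j, lam (σ⁻¹ j) * |β j| := by
  have hmono : Monotone ((fun j => |β j|) ∘ (Fin.revPerm.trans σ)) := fun i j hij =>
    hσ (Fin.rev_le_rev.mpr hij)
  have hsort := Tuple.comp_sort_eq_comp_iff_monotone.mpr hmono
  have hval : ∀ j, |β (sortPerm β j)| = |β (σ j)| := fun j => by
    simpa [sortPerm] using (congrFun hsort (Fin.rev j)).symm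
  rw [← Equiv.sum_comp σ]
  simp [sortedL1, hval]

/-- `w` lies weakly on the same side as `w₀` of the absolute value of every entry of `β` outside
the cluster at `ck`, and `|w₀|` is none of these values. -/
def SameSide {p : ℕ} (β : Fin p → ℝ) (ck w₀ w : ℝ) : Prop :=
  ∀ j, |β j| ≠ ck → (|w₀| < |β j| ∧ |w| ≤ |β j|) ∨ (|β j| < |w₀| ∧ |β j| ≤ |w|)

theorem SameSide.Hfun_eq {p : ℕ} {lam β : Fin p → ℝ} {ck w₀ w : ℝ} (h : SameSide β ck w₀ w) :
    Hfun lam β ck w = Sval lam β ck w₀ * |w| +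
      ∑ j, if |β j| = ck then 0 else lam ((sortPerm (cupd β ck w₀))⁻¹ j) * |β j| := by
  have horder : ∀ x y, |cupd β ck w₀ y| ≤ |cupd β ck w₀ x| →
      |cupd β ck w y| ≤ |cupd β ck w x| := by
    intro x y hxy
    rw [abs_cupd, abs_cupd] at hxy ⊢
    have hx := h x
    have hy := h y
    grind
  rw [Hfun, sortedL1_eq_sum_of_antitone lam _ (sortPerm (cupd β ck w₀)) fun i j hij =>
    horder _ _ (antitone_abs_comp_sortPerm _ hij), Sval, Finset.sum_mul, ← Finset.sum_add_distrib]
  refine Finset.sum_congr rfl fun j _ => ?_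
  rw [abs_cupd, abs_cupd]
  by_cases hj : |β j| = ck
  · simp [hj]
  · have hne : |β j| ≠ |w₀| := by
      rcases h j hj with h | h
      exacts [h.1.ne', h.1.ne]
    simp [hj, hne]

theorem SameSide.Hfun_sub {p : ℕ} {lam β : Fin p → ℝ} {ck w₀ w w' : ℝ}
    (h : SameSide β ck w₀ w) (h' : SameSide β ck w₀ w') :
    Hfun lam β ck w - Hfun lam β ck w' = (|w| - |w'|) * Sval lam β ck w₀ := by
  rw [h.Hfun_eq, h'.Hfun_eq]
  ring

/-- If the ordering at `w₀` is valid at `z` and near `z` in direction `δ`, and `|z + δ h|` has slope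
`s` there, then the one-sided derivative is `s` times the cluster sum at `w₀`. -/
theorem tendsto_Hfun_slope {p : ℕ} {lam β : Fin p → ℝ} {ck w₀ z δ s : ℝ}
    (hz : SameSide β ck w₀ z)
    (hev : ∀ᶠ h in nhdsWithin (0 : ℝ) (Set.Ioi 0),
      SameSide β ck w₀ (z + δ * h) ∧ |z + δ * h| - |z| = s * h) :
    Tendsto (fun h : ℝ => (Hfun lam β ck (z + δ * h) - Hfun lam β ck z) / h)
      (nhdsWithin 0 (Set.Ioi 0)) (nhds (s * Sval lam β ck w₀)) := by
  refine tendsto_const_nhds.congr' ?_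
  filter_upwards [hev, self_mem_nhdsWithin] with h hh hpos
  have hne : h ≠ 0 := ne_of_gt hpos
  rw [hh.1.Hfun_sub hz, hh.2]
  field_simp

theorem abs_add_mul_of_lt_abs {z δ h : ℝ} (hδ : δ = 1 ∨ δ = -1) (h0 : 0 ≤ h) (hz : h < |z|) :
    |z + δ * h| = |z| + sgn z * δ * h := by
  unfold sgn
  rcases hδ with rfl | rfl <;> split_ifs <;> grind

theorem sgn_mul_eq_one_or {z δ : ℝ} (hδ : δ = 1 ∨ δ = -1) : sgn z * δ = 1 ∨ sgn z * δ = -1 := by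
  unfold sgn
  rcases hδ with rfl | rfl <;> split_ifs <;> simp

open scoped Classical in
/-- Theorem: directional derivative of the partial sorted ℓ₁ norm.
For every `z ∈ ℝ` and direction `δ ∈ {−1, 1}`, the one-sided directional derivative of `H`
exists and equals the displayed case formula. -/
theorem directional_derivative_partial_sorted_l1
    {p m : ℕ} (hp : 0 < p) (hm : 0 < m)
    (lam : Fin p → ℝ)
    (hlam_mono : ∀ i j : Fin p, i ≤ j → lam j ≤ lam i)
    (hlam_nonneg : ∀ j, 0 ≤ lam j)
    (β : Fin p → ℝ) (c : Fin m → ℝ)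
    (hc_anti : StrictAnti c) (hc_nonneg : ∀ i, 0 ≤ c i)
    (h_attain : ∀ i, ∃ j, |β j| = c i)
    (h_cover : ∀ j, ∃ i, |β j| = c i)
    (k : Fin m)
    (ε : ℝ) (hε_pos : 0 < ε)
    (hε_sep : ∀ i j, i ≠ j → ε < |c i - c j|)
    (hε_min : ∀ i, c i ≠ 0 → ε < c i)
    (z δ : ℝ) (hδ : δ = 1 ∨ δ = -1) :
    Filter.Tendsto
      (fun h : ℝ => (Hfun lam β (c k) (z + δ * h) - Hfun lam β (c k) z) / h)
      (nhdsWithin 0 (Set.Ioi 0))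
      (nhds
        (if z = 0 then Sval lam β (c k) ε
         else if ∃ i, i ≠ k ∧ |z| = c i then
           sgn z * δ * Sval lam β (c k) (z + ε * δ)
         else sgn z * δ * Sval lam β (c k) z)) := by
  have hother : ∀ j, |β j| ≠ c k → ∃ i, i ≠ k ∧ |β j| = c i := by
    intro j hj
    obtain ⟨i, hi⟩ := h_cover j
    exact ⟨i, fun hik => hj (hik ▸ hi), hi⟩
  have hsmall : ∀ r : ℝ, 0 < r → ∀ᶠ h in nhdsWithin (0 : ℝ) (Set.Ioi 0), 0 < h ∧ h < r :=
    fun r hr => Ioo_mem_nhdsGT hr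
  split_ifs with hz hzc
  · subst hz
    have hside : ∀ w, |w| ≤ ε → SameSide β (c k) ε w := by
      intro w hw j hj
      obtain ⟨i, -, hi⟩ := hother j hj
      rw [hi, abs_of_pos hε_pos]
      by_cases h0 : c i = 0
      · right
        rw [h0]
        exact ⟨hε_pos, abs_nonneg w⟩
      · exact Or.inl ⟨hε_min i h0, hw.trans (hε_min i h0).le⟩
    rw [← one_mul (Sval lam β (c k) ε)]
    refine tendsto_Hfun_slope (hside 0 (by simpa using hε_pos.le)) ?_
    filter_upwards [hsmall ε hε_pos] with h hh
    have habs : |0 + δ * h| = h := by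
      rcases hδ with rfl | rfl <;> simp [abs_of_pos hh.1]
    exact ⟨hside _ (habs.trans_le hh.2.le), by rw [habs, abs_zero]; ring⟩
  · obtain ⟨i, hik, hi⟩ := hzc
    have hεz : ε < |z| := by
      rw [hi]
      exact hε_min i fun h => hz (abs_eq_zero.mp (hi.trans h))
    have hside : ∀ h, 0 ≤ h → h ≤ ε → SameSide β (c k) (z + ε * δ) (z + δ * h) := by
      intro h h0 hle j hj
      obtain ⟨l, -, hl⟩ := hother j hj
      rw [hl, mul_comm ε δ, abs_add_mul_of_lt_abs hδ hε_pos.le hεz,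
        abs_add_mul_of_lt_abs hδ h0 (hle.trans_lt hεz), hi]
      have hsep : l = i ∨ ε < |c l - c i| := or_iff_not_imp_left.mpr (hε_sep l i)
      rcases sgn_mul_eq_one_or (z := z) hδ with hs | hs <;> rw [hs] <;>
        rcases hsep with rfl | hsep <;> grind
    refine tendsto_Hfun_slope (by simpa using hside 0 le_rfl hε_pos.le) ?_
    filter_upwards [hsmall ε hε_pos] with h hh
    refine ⟨hside h hh.1.le hh.2.le, ?_⟩
    rw [abs_add_mul_of_lt_abs hδ hh.1.le (hh.2.trans hεz)]
    ring
  · push Not at hzc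
    have hne : ∀ j, |β j| ≠ c k → |z| ≠ |β j| := by
      intro j hj
      obtain ⟨i, hik, hi⟩ := hother j hj
      exact hi ▸ hzc i hik
    have hcont : Tendsto (fun h : ℝ => |z + δ * h|) (nhdsWithin 0 (Set.Ioi 0)) (nhds |z|) := by
      have : Continuous fun h : ℝ => |z + δ * h| := by fun_prop
      simpa using (this.tendsto 0).mono_left nhdsWithin_le_nhds
    have hside : ∀ᶠ h in nhdsWithin (0 : ℝ) (Set.Ioi 0), SameSide β (c k) z (z + δ * h) := by
      refine eventually_all.mpr fun j => ?_
      by_cases hj : |β j| = c k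
      · exact Eventually.of_forall fun _ h => absurd hj h
      · rcases (hne j hj).lt_or_gt with hlt | hlt
        · filter_upwards [hcont.eventually_lt_const hlt] with h hh _
          exact Or.inl ⟨hlt, hh.le⟩
        · filter_upwards [hcont.eventually_const_lt hlt] with h hh _
          exact Or.inr ⟨hlt, hh.le⟩
    refine tendsto_Hfun_slope (fun j hj => ?_) ?_
    · exact (hne j hj).lt_or_gt.imp (fun h => ⟨h, h.le⟩) fun h => ⟨h, h.le⟩
    · filter_upwards [hside, hsmall |z| (abs_pos.mpr hz)] with h hh hlt
      refine ⟨hh, ?_⟩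
      rw [abs_add_mul_of_lt_abs hδ hlt.1.le hlt.2]
      ring
end

section
/- If λ is nonincreasing with λ_p > 0, then the function G : ℝ → ℝ has exactly one minimizer over ℝ. -/
open Finset Filter

/-- The sorted ℓ₁ norm dominates every weighted sum of the absolute values. -/
theorem sum_mul_abs_comp_perm_le_sortedL1 {p : ℕ} {lam : Fin p → ℝ} (hlam : Antitone lam)
    (β : Fin p → ℝ) (σ : Equiv.Perm (Fin p)) :
    ∑ j, lam j * |β (σ j)| ≤ sortedL1 lam β := by
  have h := (hlam.monovary (antitone_abs_comp_sortPerm β)).sum_mul_comp_perm_le_sum_mul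
    (σ := σ.trans (sortPerm β).symm)
  simpa [sortedL1] using h

theorem convexOn_sortedL1 {p : ℕ} {lam : Fin p → ℝ} (hlam : Antitone lam)
    (hlam_nonneg : ∀ j, 0 ≤ lam j) : ConvexOn ℝ Set.univ (sortedL1 lam) := by
  refine ⟨convex_univ, fun x _ y _ a b ha hb _ => ?_⟩
  set σ := sortPerm (a • x + b • y) with hσ
  calc sortedL1 lam (a • x + b • y)
      = ∑ j, lam j * |a * x (σ j) + b * y (σ j)| := by simp [sortedL1, ← hσ]
    _ ≤ ∑ j, (a * (lam j * |x (σ j)|) + b * (lam j * |y (σ j)|)) := by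
        refine Finset.sum_le_sum fun j _ => ?_
        have h := abs_add_le (a * x (σ j)) (b * y (σ j))
        rw [abs_mul, abs_mul, abs_of_nonneg ha, abs_of_nonneg hb] at h
        linarith [mul_le_mul_of_nonneg_left h (hlam_nonneg j)]
    _ = a * ∑ j, lam j * |x (σ j)| + b * ∑ j, lam j * |y (σ j)| := by
        rw [Finset.sum_add_distrib, Finset.mul_sum, Finset.mul_sum]
    _ ≤ a • sortedL1 lam x + b • sortedL1 lam y :=
        add_le_add
          (mul_le_mul_of_nonneg_left (sum_mul_abs_comp_perm_le_sortedL1 hlam x σ) ha)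
          (mul_le_mul_of_nonneg_left (sum_mul_abs_comp_perm_le_sortedL1 hlam y σ) hb)

theorem abs_sgn (t : ℝ) : |sgn t| = 1 := by
  unfold sgn; split_ifs <;> simp

theorem cupd_combination {p : ℕ} (β : Fin p → ℝ) (ck : ℝ) {a b : ℝ} (hab : a + b = 1)
    (z w : ℝ) : cupd β ck (a * z + b * w) = a • cupd β ck z + b • cupd β ck w := by
  ext i
  simp only [cupd, Pi.add_apply, Pi.smul_apply, smul_eq_mul]
  split_ifs
  · ring
  · rw [← add_mul, hab, one_mul]

theorem convexOn_Hfun {p : ℕ} {lam : Fin p → ℝ} (hlam : Antitone lam)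
    (hlam_nonneg : ∀ j, 0 ≤ lam j) (β : Fin p → ℝ) (ck : ℝ) :
    ConvexOn ℝ Set.univ (Hfun lam β ck) := by
  refine ⟨convex_univ, fun z _ w _ a b ha hb hab => ?_⟩
  simp only [Hfun, smul_eq_mul, cupd_combination β ck hab]
  exact (convexOn_sortedL1 hlam hlam_nonneg).2 (Set.mem_univ _) (Set.mem_univ _) ha hb hab

/-- `H` grows at least linearly away from `0` when the weights are bounded below. -/
theorem Hfun_zero_add_le {p : ℕ} {lam : Fin p → ℝ} (hlam : Antitone lam)
    {μ : ℝ} (hμ : 0 ≤ μ) (hμ_le : ∀ j, μ ≤ lam j) (β : Fin p → ℝ) {ck : ℝ}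
    (hck : ∃ i, |β i| = ck) (z : ℝ) :
    Hfun lam β ck 0 + μ * |z| ≤ Hfun lam β ck z := by
  obtain ⟨i, hi⟩ := hck
  set σ := sortPerm (cupd β ck 0) with hσ
  have hterm : ∀ j, lam j * |cupd β ck 0 (σ j)| + (if j = σ.symm i then μ * |z| else 0)
      ≤ lam j * |cupd β ck z (σ j)| := by
    intro j
    split_ifs with hj
    · subst hj
      simp only [Equiv.apply_symm_apply, cupd, hi, if_true, mul_zero, abs_zero, zero_add,
        abs_mul, abs_sgn, one_mul]
      exact mul_le_mul_of_nonneg_right (hμ_le _) (abs_nonneg z)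
    · rw [add_zero]
      refine mul_le_mul_of_nonneg_left ?_ (hμ.trans (hμ_le j))
      unfold cupd
      split_ifs <;> simp [abs_sgn]
  calc Hfun lam β ck 0 + μ * |z|
      = ∑ j, (lam j * |cupd β ck 0 (σ j)| + (if j = σ.symm i then μ * |z| else 0)) := by
        simp [Finset.sum_add_distrib, Hfun, sortedL1, ← hσ]
    _ ≤ ∑ j, lam j * |cupd β ck z (σ j)| := Finset.sum_le_sum fun j _ => hterm j
    _ ≤ Hfun lam β ck z := sum_mul_abs_comp_perm_le_sortedL1 hlam _ σ

theorem sum_mul_cupd {n p : ℕ} (X : Matrix (Fin n) (Fin p) ℝ) (β : Fin p → ℝ) (ck z : ℝ)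
    (i : Fin n) :
    ∑ j, X i j * cupd β ck z j = ∑ j, X i j * cupd β ck 0 j + z * xtil X β ck i := by
  rw [xtil, Finset.mul_sum, ← Finset.sum_add_distrib]
  refine Finset.sum_congr rfl fun j _ => ?_
  unfold cupd
  split_ifs <;> ring

/-- `G` as a quadratic polynomial in `z` plus `H`. -/
theorem Gfun_eq {n p : ℕ} (lam : Fin p → ℝ) (X : Matrix (Fin n) (Fin p) ℝ) (y : Fin n → ℝ)
    (β : Fin p → ℝ) (ck z : ℝ) :
    Gfun lam X y β ck z = (1 / 2) * sqnorm (fun i => y i - ∑ j, X i j * cupd β ck 0 j)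
      - z * ∑ i, (y i - ∑ j, X i j * cupd β ck 0 j) * xtil X β ck i
      + z ^ 2 / 2 * sqnorm (xtil X β ck) + Hfun lam β ck z := by
  simp only [Gfun, sqnorm, sum_mul_cupd X β ck z, Finset.mul_sum]
  rw [← Finset.sum_sub_distrib, ← Finset.sum_add_distrib]
  congr 1
  exact Finset.sum_congr rfl fun i _ => by ring

/-- if `λ` is nonincreasing with `λ_p > 0`, then `G` has exactly one
minimizer over ℝ. -/
theorem G_has_unique_minimizer
    {n p m : ℕ} (hn : 0 < n) (hp : 0 < p) (hm : 0 < m)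
    (lam : Fin p → ℝ)
    (hlam_mono : ∀ i j : Fin p, i ≤ j → lam j ≤ lam i)
    (hlam_nonneg : ∀ j, 0 ≤ lam j)
    (β : Fin p → ℝ) (c : Fin m → ℝ)
    (hc_anti : StrictAnti c) (hc_nonneg : ∀ i, 0 ≤ c i)
    (h_attain : ∀ i, ∃ j, |β j| = c i)
    (h_cover : ∀ j, ∃ i, |β j| = c i)
    (k : Fin m)
    (ε : ℝ) (hε_pos : 0 < ε)
    (hε_sep : ∀ i j, i ≠ j → ε < |c i - c j|)
    (hε_min : ∀ i, c i ≠ 0 → ε < c i)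
    (X : Matrix (Fin n) (Fin p) ℝ) (y : Fin n → ℝ)
    (hlam_last : 0 < lam ⟨p - 1, by omega⟩) :
    ∃! z : ℝ, ∀ w : ℝ, Gfun lam X y β (c k) z ≤ Gfun lam X y β (c k) w := by
  have hlam : Antitone lam := fun i j h => hlam_mono i j h
  have hlast_le : ∀ j, lam ⟨p - 1, by omega⟩ ≤ lam j := fun j =>
    hlam_mono _ _ (Fin.le_def.mpr (by simp only; omega))
  have hconv := convexOn_Hfun hlam hlam_nonneg β (c k)
  have hgrow := Hfun_zero_add_le hlam hlam_last.le hlast_le β (h_attain k)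
  have hG := Gfun_eq lam X y β (c k)
  have hcont : Continuous (Gfun lam X y β (c k)) := by
    have hH : Continuous (Hfun lam β (c k)) := hconv.locallyLipschitz.continuous
    rw [funext hG]
    fun_prop
  have hlim : Tendsto (Gfun lam X y β (c k)) (cocompact ℝ) atTop := by
    refine tendsto_atTop_mono (fun z => ?_) (tendsto_atTop_add_const_left _
      (Hfun lam β (c k) 0) ((tendsto_norm_cocompact_atTop (E := ℝ)).const_mul_atTop hlam_last))
    have hsq : 0 ≤ sqnorm (fun i => y i - ∑ j, X i j * cupd β (c k) z j) :=
      Finset.sum_nonneg fun i _ => sq_nonneg _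
    have hz := hgrow z
    rw [Real.norm_eq_abs, Gfun]
    linarith
  obtain ⟨z, hz⟩ := hcont.exists_forall_le hlim
  refine ⟨z, hz, fun w hw => ?_⟩
  by_contra hne
  have hmid := hconv.2 (Set.mem_univ z) (Set.mem_univ w) (by norm_num : (0 : ℝ) ≤ 1 / 2)
    (by norm_num : (0 : ℝ) ≤ 1 / 2) (by norm_num)
  simp only [smul_eq_mul] at hmid
  have hzm := hz (1 / 2 * z + 1 / 2 * w)
  have hwm := hw (1 / 2 * z + 1 / 2 * w)
  rw [hG, hG] at hzm hwm
  have hω_nonneg : 0 ≤ sqnorm (xtil X β (c k)) := Finset.sum_nonneg fun i _ => sq_nonneg _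
  have hω : sqnorm (xtil X β (c k)) = 0 := by
    have hpos : 0 < (w - z) ^ 2 := by have := sub_ne_zero.mpr hne; positivity
    refine le_antisymm (le_of_mul_le_mul_left ?_ hpos) hω_nonneg
    linear_combination 4 * hzm + 4 * hwm + 8 * hmid
  have hxtil : ∀ i, xtil X β (c k) i = 0 := fun i =>
    pow_eq_zero_iff two_ne_zero |>.mp
      ((Finset.sum_eq_zero_iff_of_nonneg fun i _ => sq_nonneg _).mp hω i (Finset.mem_univ i))
  have heq_zero : ∀ x, (∀ v, Gfun lam X y β (c k) x ≤ Gfun lam X y β (c k) v) → x = 0 := by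
    intro x hx
    have h0 := hx 0
    rw [hG, hG] at h0
    simp only [hxtil, hω, mul_zero, Finset.sum_const_zero] at h0
    by_contra hx0
    have := mul_pos hlam_last (abs_pos.mpr hx0)
    linarith [hgrow x]
  exact hne ((heq_zero w hw).trans (heq_zero z hz).symm)
end
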